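/- arXiv:1611.02249 — 2 statements merged into one kernel-verified Lean document; each statement's English description precedes it below -/
import Mathlib

section
/- Let U and P be the parsimonious relations on the 28-element set H of major, minor, and augmented triads. In the monoid of binary relations on H under relational composition, (U·P)²·U² = P·(U·P)²·U²·P and U²·(P·U)² = P·U²·(P·U)²·P (products of relations written as words). -/
/-- The 28-element set of the 24 major and minor triads and the 4 augmented triads:
`Sum.inl n` is the major triad `n_M`, `Sum.inr (Sum.inl n)` is the minor triad `n_m`,
and `Sum.inr (Sum.inr k)` is the augmented triad `k_aug`. -/
abbrev Htriads : Type := (ZMod 12) ⊕ (ZMod 12) ⊕ (ZMod 4)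

/-- Binary relations on `Htriads`. -/
abbrev MRel : Type := Htriads → Htriads → Prop

/-- The monoid of binary relations on `Htriads`: `r * s` relates `x` to `z` iff there is `y`
with `x r y` and `y s z` (i.e. first apply `r`, then `s`), and `1` is the equality relation. -/
instance : Monoid MRel where
  one := fun x y => x = y
  mul := fun r s => fun x z => ∃ y, r x y ∧ s y z
  mul_assoc r s t := by
    funext x z
    apply propext
    constructor
    · rintro ⟨y, ⟨w, hw1, hw2⟩, hy⟩
      exact ⟨w, hw1, y, hw2, hy⟩
    · rintro ⟨w, hw1, y, hy1, hy2⟩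
      exact ⟨y, ⟨w, hw1, hy1⟩, hy2⟩
  one_mul r := by
    funext x z
    apply propext
    constructor
    · rintro ⟨y, rfl, h⟩
      exact h
    · intro h
      exact ⟨x, rfl, h⟩
  mul_one r := by
    funext x z
    apply propext
    constructor
    · rintro ⟨y, h, rfl⟩
      exact h
    · intro h
      exact ⟨z, h, rfl⟩

/-- The major triad on root `n`. -/
def maj (n : ZMod 12) : Htriads := Sum.inl n
/-- The minor triad on root `n`. -/
def mino (n : ZMod 12) : Htriads := Sum.inr (Sum.inl n)
/-- The augmented triad `k_aug`, `k ∈ ℤ/4`. -/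
def aug (k : ZMod 4) : Htriads := Sum.inr (Sum.inr k)

/-- Reduction mod 4 of a pitch class mod 12. -/
def m4 (n : ZMod 12) : ZMod 4 := ZMod.castHom (show (4:ℕ) ∣ 12 by norm_num) (ZMod 4) n

/-- The relation `𝒰`: the symmetric relation relating exactly `n_M` with `(n mod 4)_aug`
and `n_m` with `((n+3) mod 4)_aug`. -/
def Urel : MRel := fun x y =>
  (∃ n : ZMod 12, x = maj n ∧ y = aug (m4 n)) ∨
  (∃ n : ZMod 12, x = aug (m4 n) ∧ y = maj n) ∨
  (∃ n : ZMod 12, x = mino n ∧ y = aug (m4 (n + 3))) ∨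
  (∃ n : ZMod 12, x = aug (m4 (n + 3)) ∧ y = mino n)

/-- The relation `𝒫`: the symmetric relation relating exactly `n_M` with `n_m`,
and each augmented triad with itself. -/
def Prel : MRel := fun x y =>
  (∃ n : ZMod 12, x = maj n ∧ y = mino n) ∨
  (∃ n : ZMod 12, x = mino n ∧ y = maj n) ∨
  (∃ k : ZMod 4, x = aug k ∧ y = aug k)

/-- The relation `ℒ`: the symmetric relation relating exactly `n_M` with `(n+4)_m`,
and each augmented triad with itself. -/
def Lrel : MRel := fun x y =>
  (∃ n : ZMod 12, x = maj n ∧ y = mino (n + 4)) ∨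
  (∃ n : ZMod 12, x = mino (n + 4) ∧ y = maj n) ∨
  (∃ k : ZMod 4, x = aug k ∧ y = aug k)

/-- Douthett's parsimonious relation `𝒮 = P_{1,0}` on major, minor and augmented triads. -/
def Srel : MRel := fun x y =>
  (∃ n : ZMod 12, x = maj n ∧ y = mino n) ∨
  (∃ n : ZMod 12, x = mino n ∧ y = maj n) ∨
  (∃ n : ZMod 12, x = maj n ∧ y = mino (n + 4)) ∨
  (∃ n : ZMod 12, x = mino (n + 4) ∧ y = maj n) ∨
  (∃ n : ZMod 12, x = maj n ∧ y = aug (m4 n)) ∨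
  (∃ n : ZMod 12, x = aug (m4 n) ∧ y = maj n) ∨
  (∃ n : ZMod 12, x = mino n ∧ y = aug (m4 (n + 3))) ∨
  (∃ n : ZMod 12, x = aug (m4 (n + 3)) ∧ y = mino n)

/-- Douthett's parsimonious relation `𝒯 = P_{2,0}` on major, minor and augmented triads. -/
def Trel : MRel := fun x y =>
  (∃ n : ZMod 12, x = maj n ∧ y = maj (n + 4)) ∨
  (∃ n : ZMod 12, x = maj n ∧ y = maj (n + 8)) ∨
  (∃ n : ZMod 12, x = maj n ∧ y = mino (n + 1)) ∨
  (∃ n : ZMod 12, x = mino (n + 1) ∧ y = maj n) ∨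
  (∃ n : ZMod 12, x = maj n ∧ y = mino (n + 5)) ∨
  (∃ n : ZMod 12, x = mino (n + 5) ∧ y = maj n) ∨
  (∃ n : ZMod 12, x = maj n ∧ y = aug (m4 (n + 3))) ∨
  (∃ n : ZMod 12, x = aug (m4 (n + 3)) ∧ y = maj n) ∨
  (∃ n : ZMod 12, x = mino n ∧ y = mino (n + 4)) ∨
  (∃ n : ZMod 12, x = mino n ∧ y = mino (n + 8)) ∨
  (∃ n : ZMod 12, x = mino n ∧ y = aug (m4 n)) ∨
  (∃ n : ZMod 12, x = aug (m4 n) ∧ y = mino n)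

set_option linter.unusedSimpArgs false

theorem mrel_mul_apply (r s : MRel) (x z : Htriads) : (r * s) x z ↔ ∃ y, r x y ∧ s y z := Iff.rfl

theorem m4_add3 (n : ZMod 12) : m4 (n + 3) = m4 n + 3 := by
  unfold m4
  rw [map_add, map_ofNat]

theorem ex_m4 (p : ZMod 4 → Prop) : (∃ n : ZMod 12, p (m4 n)) ↔ ∃ k, p k := by
  constructor
  · rintro ⟨n, h⟩
    exact ⟨_, h⟩
  · rintro ⟨k, h⟩
    obtain ⟨n, rfl⟩ := ZMod.castHom_surjective (show (4:ℕ) ∣ 12 by norm_num) k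
    exact ⟨n, h⟩

theorem ex_H (p : Htriads → Prop) :
    (∃ x, p x) ↔ (∃ n, p (maj n)) ∨ (∃ n, p (mino n)) ∨ (∃ k, p (aug k)) := by
  rw [Sum.exists, Sum.exists]
  rfl

theorem U_Mm (n m) : Urel (maj n) (mino m) ↔ False := by simp [Urel, maj, mino, aug]
theorem U_mM (n m) : Urel (mino n) (maj m) ↔ False := by simp [Urel, maj, mino, aug]
theorem U_MM (n m) : Urel (maj n) (maj m) ↔ False := by simp [Urel, maj, mino, aug]
theorem U_mm (n m) : Urel (mino n) (mino m) ↔ False := by simp [Urel, maj, mino, aug]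
theorem U_aa (n m) : Urel (aug n) (aug m) ↔ False := by simp [Urel, maj, mino, aug]
theorem U_Ma (n k) : Urel (maj n) (aug k) ↔ k = m4 n := by simp [Urel, maj, mino, aug]
theorem U_aM (n k) : Urel (aug k) (maj n) ↔ k = m4 n := by simp [Urel, maj, mino, aug]
theorem U_ma (n k) : Urel (mino n) (aug k) ↔ k = m4 n + 3 := by
  simp [Urel, maj, mino, aug, m4_add3]
theorem U_am (n k) : Urel (aug k) (mino n) ↔ k = m4 n + 3 := by
  simp [Urel, maj, mino, aug, m4_add3]
theorem P_Mm (n m) : Prel (maj n) (mino m) ↔ m = n := by simp [Prel, maj, mino, aug]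
theorem P_mM (n m) : Prel (mino n) (maj m) ↔ m = n := by simp [Prel, maj, mino, aug]
theorem P_MM (n m) : Prel (maj n) (maj m) ↔ False := by simp [Prel, maj, mino, aug]
theorem P_mm (n m) : Prel (mino n) (mino m) ↔ False := by simp [Prel, maj, mino, aug]
theorem P_aa (n m) : Prel (aug n) (aug m) ↔ m = n := by simp [Prel, maj, mino, aug]
theorem P_Ma (n k) : Prel (maj n) (aug k) ↔ False := by simp [Prel, maj, mino, aug]
theorem P_aM (n k) : Prel (aug k) (maj n) ↔ False := by simp [Prel, maj, mino, aug]
theorem P_ma (n k) : Prel (mino n) (aug k) ↔ False := by simp [Prel, maj, mino, aug]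
theorem P_am (n k) : Prel (aug k) (mino n) ↔ False := by simp [Prel, maj, mino, aug]

/-- Relation `U P U` in closed form on representatives: the middle of both words. -/
def Qrel : MRel := Urel * Prel * Urel

theorem Q_aa (a b) : Qrel (aug a) (aug b) ↔ b = a + 1 ∨ b = a + 3 := by
  simp only [Qrel, mrel_mul_apply, ex_H, U_Mm, U_mM, U_MM, U_mm, U_aa, U_Ma, U_aM, U_ma, U_am,
    P_Mm, P_mM, P_MM, P_mm, P_aa, P_Ma, P_aM, P_ma, P_am, false_and, and_false, exists_false,
    or_false, false_or, exists_eq_right, exists_eq_left, exists_eq_right', exists_eq_left']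
  rw [ex_m4 (fun k => a = k + 3 ∧ b = k), ex_m4 (fun k => a = k ∧ b = k + 3)]
  revert a b
  decide

theorem Q_Ma (a b) : Qrel (maj a) (aug b) ↔ False := by
  simp [-Sum.exists, Qrel, mrel_mul_apply, ex_H, U_Mm, U_mM, U_MM, U_mm, U_aa, U_Ma, U_aM, U_ma, U_am,
    P_Mm, P_mM, P_MM, P_mm, P_aa, P_Ma, P_aM, P_ma, P_am]
theorem Q_ma (a b) : Qrel (mino a) (aug b) ↔ False := by
  simp [-Sum.exists, Qrel, mrel_mul_apply, ex_H, U_Mm, U_mM, U_MM, U_mm, U_aa, U_Ma, U_aM, U_ma, U_am,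
    P_Mm, P_mM, P_MM, P_mm, P_aa, P_Ma, P_aM, P_ma, P_am]
theorem Q_aM (a b) : Qrel (aug a) (maj b) ↔ False := by
  simp [-Sum.exists, Qrel, mrel_mul_apply, ex_H, U_Mm, U_mM, U_MM, U_mm, U_aa, U_Ma, U_aM, U_ma, U_am,
    P_Mm, P_mM, P_MM, P_mm, P_aa, P_Ma, P_aM, P_ma, P_am]
theorem Q_am (a b) : Qrel (aug a) (mino b) ↔ False := by
  simp [-Sum.exists, Qrel, mrel_mul_apply, ex_H, U_Mm, U_mM, U_MM, U_mm, U_aa, U_Ma, U_aM, U_ma, U_am,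
    P_Mm, P_mM, P_MM, P_mm, P_aa, P_Ma, P_aM, P_ma, P_am]

/-- The word `U P U P U`. -/
def Wrel : MRel := Urel * Prel * Qrel

theorem W_eq : Wrel = Qrel * Prel * Urel := by
  simp only [Wrel, Qrel, mul_assoc]

theorem W_MM (a b) : Wrel (maj a) (maj b) ↔ False := by
  simp [-Sum.exists, Wrel, mrel_mul_apply, ex_H, U_Mm, U_MM, P_aa, P_aM, P_am, Q_aM]
theorem W_Mm (a b) : Wrel (maj a) (mino b) ↔ False := by
  simp [-Sum.exists, Wrel, mrel_mul_apply, ex_H, U_Mm, U_MM, P_aa, P_aM, P_am, Q_am]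
theorem W_mM (a b) : Wrel (mino a) (maj b) ↔ False := by
  simp [-Sum.exists, Wrel, mrel_mul_apply, ex_H, U_mM, U_mm, P_aa, P_aM, P_am, Q_aM]
theorem W_mm (a b) : Wrel (mino a) (mino b) ↔ False := by
  simp [-Sum.exists, Wrel, mrel_mul_apply, ex_H, U_mM, U_mm, P_aa, P_aM, P_am, Q_am]
theorem W_aa (a b) : Wrel (aug a) (aug b) ↔ False := by
  simp [-Sum.exists, Wrel, mrel_mul_apply, ex_H, U_aa, P_MM, P_Mm, P_mM, P_mm, P_Ma, P_ma, Q_Ma, Q_ma]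
theorem W_Ma (a b) : Wrel (maj a) (aug b) ↔ b = m4 a + 1 ∨ b = m4 a + 3 := by
  simp [-Sum.exists, Wrel, mrel_mul_apply, ex_H, U_MM, U_Mm, U_Ma, P_aa, P_aM, P_am, Q_aa]
theorem W_ma (a b) : Wrel (mino a) (aug b) ↔ b = m4 a + 3 + 1 ∨ b = m4 a + 3 + 3 := by
  simp [-Sum.exists, Wrel, mrel_mul_apply, ex_H, U_mM, U_mm, U_ma, P_aa, P_aM, P_am, Q_aa]
theorem W_aM (a b) : Wrel (aug a) (maj b) ↔ m4 b = a + 1 ∨ m4 b = a + 3 := by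
  simp [-Sum.exists, W_eq, mrel_mul_apply, ex_H, U_MM, U_mM, U_aM, P_aa, P_Ma, P_ma, Q_aa, Q_aM, Q_am]
theorem W_am (a b) : Wrel (aug a) (mino b) ↔ m4 b + 3 = a + 1 ∨ m4 b + 3 = a + 3 := by
  simp [-Sum.exists, W_eq, mrel_mul_apply, ex_H, U_Mm, U_mm, U_am, P_aa, P_Ma, P_ma, Q_aa, Q_aM, Q_am]

theorem word1 : Wrel * Urel = Prel * (Wrel * Urel) * Prel := by
  funext x z
  apply propext
  obtain n | n | a := x <;> obtain m | m | b := z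
  all_goals
    simp only [← maj.eq_1, ← mino.eq_1, ← aug.eq_1, mrel_mul_apply, ex_H, U_Mm, U_mM, U_MM, U_mm,
      U_aa, U_Ma, U_aM, U_ma, U_am, W_Mm, W_mM, W_MM, W_mm, W_aa, W_Ma, W_aM, W_ma, W_am,
      P_Mm, P_mM, P_MM, P_mm, P_aa, P_Ma, P_aM, P_ma, P_am, false_and, and_false, exists_false,
      or_false, false_or, exists_eq_right, exists_eq_left, exists_eq_right', exists_eq_left']
  all_goals try generalize m4 n = n
  all_goals try generalize m4 m = m
  all_goals try (clear * -; revert n m; decide)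
  all_goals try simp

theorem word2 : Urel * Wrel = Prel * (Urel * Wrel) * Prel := by
  funext x z
  apply propext
  obtain n | n | a := x <;> obtain m | m | b := z
  all_goals
    simp only [← maj.eq_1, ← mino.eq_1, ← aug.eq_1, mrel_mul_apply, ex_H, U_Mm, U_mM, U_MM, U_mm,
      U_aa, U_Ma, U_aM, U_ma, U_am, W_Mm, W_mM, W_MM, W_mm, W_aa, W_Ma, W_aM, W_ma, W_am,
      P_Mm, P_mM, P_MM, P_mm, P_aa, P_Ma, P_aM, P_ma, P_am, false_and, and_false, exists_false,
      or_false, false_or, exists_eq_right, exists_eq_left, exists_eq_right', exists_eq_left']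
  all_goals try generalize m4 n = n
  all_goals try generalize m4 m = m
  all_goals try (clear * -; revert n m; decide)
  all_goals try simp

/-- `(U·P)²·U² = P·(U·P)²·U²·P` and `U²·(P·U)² = P·U²·(P·U)²·P`. -/
theorem stmt5 :
    (Urel * Prel) ^ 2 * Urel ^ 2 = Prel * (Urel * Prel) ^ 2 * Urel ^ 2 * Prel ∧
    Urel ^ 2 * (Prel * Urel) ^ 2 = Prel * Urel ^ 2 * (Prel * Urel) ^ 2 * Prel := by
  have h1 := word1
  have h2 := word2
  simp only [Wrel, Qrel, mul_assoc] at h1 h2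
  simp only [pow_two, mul_assoc]
  exact ⟨h1, h2⟩
end

section
/- Let M_UPL be the submonoid of binary relations on the 28-element set H of major, minor, and augmented triads generated by the parsimonious relations U, P, L. There exists a monoid automorphism N of M_UPL with N(L) = L, N(P) = P, and N(U) = P·U·P, and this automorphism is nontrivial, i.e. P·U·P ≠ U. -/
/-- The submonoid `M_UPL` of relations on `Htriads` generated by `{U, P, L}`. -/
def MUPL : Submonoid MRel := Submonoid.closure {Urel, Prel, Lrel}

lemma Urel_mem : Urel ∈ MUPL := Submonoid.subset_closure (Set.mem_insert _ _)
lemma Prel_mem : Prel ∈ MUPL :=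
  Submonoid.subset_closure (Set.mem_insert_of_mem _ (Set.mem_insert _ _))
lemma Lrel_mem : Lrel ∈ MUPL :=
  Submonoid.subset_closure (Set.mem_insert_of_mem _ (Set.mem_insert_of_mem _ rfl))

/-- Parity swap as a function. -/
def pfun : Htriads → Htriads
  | Sum.inl n => Sum.inr (Sum.inl n)
  | Sum.inr (Sum.inl n) => Sum.inl n
  | Sum.inr (Sum.inr k) => Sum.inr (Sum.inr k)

/-- The leading-tone exchange as a function. -/
def lfun : Htriads → Htriads
  | Sum.inl n => Sum.inr (Sum.inl (n + 4))
  | Sum.inr (Sum.inl n) => Sum.inl (n - 4)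
  | Sum.inr (Sum.inr k) => Sum.inr (Sum.inr k)

/-- The conjugating involution. -/
def sig : Htriads → Htriads
  | Sum.inl n => Sum.inl (7 * n)
  | Sum.inr (Sum.inl n) => Sum.inr (Sum.inl (7 * n))
  | Sum.inr (Sum.inr k) => Sum.inr (Sum.inr (3 - k))

/-- The set of triads adjacent to an augmented triad. -/
def uprop : Htriads → Htriads → Prop
  | Sum.inl n, Sum.inr (Sum.inr k) => k = m4 n
  | Sum.inr (Sum.inr k), Sum.inl n => k = m4 n
  | Sum.inr (Sum.inl n), Sum.inr (Sum.inr k) => k = m4 (n + 3)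
  | Sum.inr (Sum.inr k), Sum.inr (Sum.inl n) => k = m4 (n + 3)
  | _, _ => False

lemma Prel_iff (x y : Htriads) : Prel x y ↔ y = pfun x := by
  rcases x with n | n | n <;> rcases y with m | m | m <;>
    simp [Prel, maj, mino, aug, pfun, eq_comm]

lemma Lrel_iff (x y : Htriads) : Lrel x y ↔ y = lfun x := by
  rcases x with n | n | n <;> rcases y with m | m | m <;>
    simp [Lrel, maj, mino, aug, lfun, eq_comm, eq_sub_iff_add_eq]

lemma Urel_iff (x y : Htriads) : Urel x y ↔ uprop x y := by
  rcases x with n | n | n <;> rcases y with m | m | m <;>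
    simp [Urel, maj, mino, aug, uprop]

lemma sig_sig : ∀ x, sig (sig x) = x := by decide
lemma pfun_pfun : ∀ x, pfun (pfun x) = x := by decide
lemma sig_pfun : ∀ x, sig (pfun x) = pfun (sig x) := by decide
lemma sig_lfun : ∀ x, sig (lfun x) = lfun (sig x) := by decide
lemma m4_a : ∀ n : ZMod 12, m4 (7 * n) = 3 - m4 (n + 3) := by decide
lemma m4_b : ∀ n : ZMod 12, m4 (7 * n + 3) = 3 - m4 n := by decide

lemma uprop_sig (x y : Htriads) : uprop (sig x) (sig y) ↔ uprop (pfun x) (pfun y) := by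
  rcases x with n | n | n <;> rcases y with m | m | m <;>
    simp [uprop, sig, pfun, m4_a, m4_b]

/-- Conjugation by `sig`. -/
def cj (r : MRel) : MRel := fun x y => r (sig x) (sig y)

lemma cj_cj (r : MRel) : cj (cj r) = r := by
  funext x y; simp [cj, sig_sig]

lemma cj_one : cj 1 = 1 := by
  funext x y
  apply propext
  change sig x = sig y ↔ x = y
  exact ⟨fun h => by rw [← sig_sig x, h, sig_sig], fun h => by rw [h]⟩

lemma cj_mul (r s : MRel) : cj (r * s) = cj r * cj s := by
  funext x y
  apply propext
  constructor
  · rintro ⟨z, h1, h2⟩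
    exact ⟨sig z, by simpa [cj, sig_sig] using h1, by simpa [cj, sig_sig] using h2⟩
  · rintro ⟨z, h1, h2⟩
    exact ⟨sig z, h1, h2⟩

lemma cj_P : cj Prel = Prel := by
  funext x y
  apply propext
  simp only [cj, Prel_iff, ← sig_pfun]
  exact ⟨fun h => by rw [← sig_sig y, h, sig_sig], fun h => by rw [h]⟩

lemma cj_L : cj Lrel = Lrel := by
  funext x y
  apply propext
  simp only [cj, Lrel_iff, ← sig_lfun]
  exact ⟨fun h => by rw [← sig_sig y, h, sig_sig], fun h => by rw [h]⟩

lemma PUP_iff (x y : Htriads) : (Prel * Urel * Prel) x y ↔ uprop (pfun x) (pfun y) := by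
  constructor
  · rintro ⟨z, ⟨w, h1, h2⟩, h3⟩
    rw [Prel_iff] at h1 h3
    rw [Urel_iff] at h2
    subst h1 h3
    rwa [pfun_pfun]
  · intro h
    exact ⟨pfun y, ⟨pfun x, (Prel_iff _ _).2 rfl, (Urel_iff _ _).2 h⟩,
      (Prel_iff _ _).2 (pfun_pfun y).symm⟩

lemma cj_U : cj Urel = Prel * Urel * Prel := by
  funext x y
  apply propext
  rw [PUP_iff, ← uprop_sig, ← Urel_iff]
  rfl

lemma cj_mem {r : MRel} (h : r ∈ MUPL) : cj r ∈ MUPL := by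
  induction h using Submonoid.closure_induction with
  | mem x hx =>
    rcases hx with rfl | rfl | rfl
    · rw [cj_U]
      exact mul_mem (mul_mem Prel_mem Urel_mem) Prel_mem
    · rw [cj_P]; exact Prel_mem
    · rw [cj_L]; exact Lrel_mem
  | one => rw [cj_one]; exact one_mem _
  | mul x y _ _ hx hy => rw [cj_mul]; exact mul_mem hx hy

/-- there exists a monoid automorphism `N` of `M_UPL` with `N(L) = L`,
`N(P) = P` and `N(U) = P·U·P`, and it is nontrivial, i.e. `P·U·P ≠ U`. -/
theorem stmt10 :
    (∃ N : MulAut MUPL,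
      N ⟨Lrel, Lrel_mem⟩ = ⟨Lrel, Lrel_mem⟩ ∧
      N ⟨Prel, Prel_mem⟩ = ⟨Prel, Prel_mem⟩ ∧
      (N ⟨Urel, Urel_mem⟩ : MRel) = Prel * Urel * Prel) ∧
    Prel * Urel * Prel ≠ Urel := by
  refine ⟨⟨{ toFun := fun r => ⟨cj r.1, cj_mem r.2⟩
             invFun := fun r => ⟨cj r.1, cj_mem r.2⟩
             left_inv := fun r => Subtype.ext (cj_cj _)
             right_inv := fun r => Subtype.ext (cj_cj _)
             map_mul' := fun r s => Subtype.ext (cj_mul _ _) },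
    Subtype.ext cj_L, Subtype.ext cj_P, cj_U⟩, ?_⟩
  intro h
  have h1 := (PUP_iff (Sum.inl 0) (Sum.inr (Sum.inr 0)))
  rw [h, Urel_iff] at h1
  have h2 : uprop (Sum.inl 0) (Sum.inr (Sum.inr 0)) := by
    change (0 : ZMod 4) = m4 0
    decide
  have h3 : (0 : ZMod 4) = m4 (0 + 3) := h1.1 h2
  revert h3
  decide
end
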